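/- Let L > 0 and μ > 0, set λ = (3π)^{2/5} μ^{-4/5} and l = π/√λ, and assume l < L/2. Define ψ₁ : ℝ → ℝ by ψ₁(x) = (1/(λμ))(1 + cos(√λ (x − L/2))) if |x − L/2| ≤ l and ψ₁(x) = 0 otherwise. Then ψ₁ is L²-normalized on [0, L]: ∫₀ᴸ ψ₁(x)² dx = 1. -/

import Mathlib

open Real MeasureTheory

/-!
The bump `1 + cos (√λ (x - L/2))` on `[L/2 - π/√λ, L/2 + π/√λ] ⊆ [0, L]` covers one full period of
the cosine, so its squared `L²` norm is `3π/√λ`. With the amplitude `1/(λμ)` the normalization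
condition becomes `λ² √λ μ² = 3π`, which is what the exponents `2/5` and `-4/5` are chosen for.
-/

open Set

theorem intervalIntegral_indicator_Icc {E : Type*} [NormedAddCommGroup E] [NormedSpace ℝ E]
    {ν : Measure ℝ} [NullSingletonClass ν] {a b c d : ℝ} (hac : a ≤ c) (hcd : c ≤ d) (hdb : d ≤ b)
    (f : ℝ → E) :
    ∫ x in a..b, (Icc c d).indicator f x ∂ν = ∫ x in c..d, f x ∂ν := by
  rw [intervalIntegral.integral_of_le (hac.trans (hcd.trans hdb)),
    intervalIntegral.integral_of_le hcd, ← integral_Icc_eq_integral_Ioc,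
    ← integral_Icc_eq_integral_Ioc, setIntegral_indicator measurableSet_Icc,
    inter_eq_right.2 (Icc_subset_Icc hac hdb)]

theorem integral_one_add_cos_sq : ∫ x in -π..π, (1 + cos x) ^ 2 = 3 * π := by
  have hcos : ∫ x in -π..π, cos x = 0 := by simp
  have hcos_sq : ∫ x in -π..π, cos x ^ 2 = π := by
    simp only [integral_cos_sq, sin_neg, sin_pi]
    ring
  calc ∫ x in -π..π, (1 + cos x) ^ 2
      = ∫ x in -π..π, (1 + 2 * cos x + cos x ^ 2) := by
        congr! 2 with x
        ring
    _ = (∫ _ in -π..π, (1 : ℝ)) + 2 * (∫ x in -π..π, cos x) + ∫ x in -π..π, cos x ^ 2 := by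
        rw [intervalIntegral.integral_add, intervalIntegral.integral_add,
          intervalIntegral.integral_const_mul] <;>
        exact Continuous.intervalIntegrable (by fun_prop) _ _
    _ = 3 * π := by
        rw [hcos, hcos_sq, intervalIntegral.integral_const, smul_eq_mul]
        ring

/-- The raised-cosine bump of frequency `s > 0` centred at `c`: one full period of `1 + cos`, from
zero to zero, extended by `0`. The paper's `ψ₁` is `(1/(λμ)) * raisedCosine √λ (L/2)`. -/
noncomputable def raisedCosine (s c : ℝ) : ℝ → ℝ :=
  (Icc (c - π / s) (c + π / s)).indicator fun x ↦ 1 + cos (s * (x - c))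

theorem raisedCosine_apply (s c x : ℝ) :
    raisedCosine s c x = if |x - c| ≤ π / s then 1 + cos (s * (x - c)) else 0 := by
  simp only [raisedCosine, indicator_apply, ← mem_Icc_iff_abs_le, abs_sub_comm c x]

theorem integral_raisedCosine_sq {s a b c : ℝ} (hs : 0 < s) (ha : a ≤ c - π / s)
    (hb : c + π / s ≤ b) : ∫ x in a..b, raisedCosine s c x ^ 2 = 3 * π / s := by
  have hle : c - π / s ≤ c + π / s := by linarith [div_pos pi_pos hs]
  calc ∫ x in a..b, raisedCosine s c x ^ 2
      = ∫ x in a..b, (Icc (c - π / s) (c + π / s)).indicator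
          (fun x ↦ (1 + cos (s * (x - c))) ^ 2) x := by
        simp only [raisedCosine, indicator_apply, ite_pow, zero_pow two_ne_zero]
    _ = ∫ x in (c - π / s)..(c + π / s), (1 + cos (s * x - s * c)) ^ 2 := by
        simp only [intervalIntegral_indicator_Icc ha hle hb, mul_sub]
    _ = s⁻¹ * ∫ x in -π..π, (1 + cos x) ^ 2 := by
        rw [intervalIntegral.integral_comp_mul_sub (fun x ↦ (1 + cos x) ^ 2) hs.ne', smul_eq_mul]
        congr 2 <;> field_simp <;> ring
    _ = 3 * π / s := by
        rw [integral_one_add_cos_sq]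
        ring

theorem sq_mul_sqrt_mul_sq_of_eq_rpow {p μ lam : ℝ} (hp : 0 ≤ p) (hμ : 0 < μ)
    (hlam : lam = p ^ ((2 : ℝ) / 5) * μ ^ (-(4 : ℝ) / 5)) :
    lam ^ 2 * √lam * μ ^ 2 = p := by
  have hlam_nonneg : 0 ≤ lam := by rw [hlam]; positivity
  have hlam_rpow : lam ^ ((5 : ℝ) / 2) = p * μ ^ (-2 : ℝ) := by
    rw [hlam, mul_rpow (by positivity) (by positivity), ← rpow_mul hp, ← rpow_mul hμ.le]
    norm_num
  calc lam ^ 2 * √lam * μ ^ 2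
      = lam ^ ((5 : ℝ) / 2) * μ ^ 2 := by
        rw [sqrt_eq_rpow, ← rpow_natCast lam 2, ← rpow_add_of_nonneg hlam_nonneg] <;> norm_num
    _ = p * (μ ^ (-2 : ℝ) * μ ^ (2 : ℝ)) := by
        rw [hlam_rpow, mul_assoc, rpow_two]
    _ = p := by
        rw [← rpow_add hμ]
        norm_num

theorem stmt_0 (L μ lam l : ℝ) (hL : 0 < L) (hμ : 0 < μ)
    (hlam : lam = (3 * Real.pi) ^ ((2 : ℝ) / 5) * μ ^ (-(4 : ℝ) / 5))
    (hl : l = Real.pi / Real.sqrt lam) (hlL : l < L / 2)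
    (ψ : ℝ → ℝ)
    (hψ : ∀ x : ℝ, ψ x =
      if |x - L / 2| ≤ l then (1 / (lam * μ)) * (1 + Real.cos (Real.sqrt lam * (x - L / 2)))
      else 0) :
    ∫ x in (0 : ℝ)..L, (ψ x) ^ 2 = 1 := by
  have hlam_pos : 0 < lam := by rw [hlam]; positivity
  have hsqrt_pos : 0 < √lam := sqrt_pos.2 hlam_pos
  have hnormalization : lam ^ 2 * √lam * μ ^ 2 = 3 * π :=
    sq_mul_sqrt_mul_sq_of_eq_rpow (by positivity) hμ hlam
  have hψ_eq (x : ℝ) : ψ x = 1 / (lam * μ) * raisedCosine √lam (L / 2) x := by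
    rw [hψ, raisedCosine_apply, ← hl, mul_ite, mul_zero]
  calc ∫ x in (0 : ℝ)..L, ψ x ^ 2
      = (1 / (lam * μ)) ^ 2 * ∫ x in (0 : ℝ)..L, raisedCosine √lam (L / 2) x ^ 2 := by
        simp only [hψ_eq, mul_pow, intervalIntegral.integral_const_mul]
    _ = (1 / (lam * μ)) ^ 2 * (3 * π / √lam) := by
        rw [integral_raisedCosine_sq hsqrt_pos] <;> linarith
    _ = 1 := by
        rw [← hnormalization]
        field_simp
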